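/- arXiv:1304.5357 — 5 statements merged into one kernel-verified Lean document; each statement's English description precedes it below -/
import Mathlib

section
/- Let k and d be integers with 1 ≤ k ≤ d, let B > 0 be real, set α = B/k, and let γ be a real with 0 ≤ γ < dB/(k(d−k+1)). Then C_{k,d}(α,γ) = ∑_{j=0}^{k−1} min{B/k, ((d−j)/d)·γ} < B. In other words, at minimum storage α = B/k, the repair bandwidth γ = dB/(k(d−k+1)) of the MSR point is the minimum bandwidth allowing the storage of a file of size B. -/
/-!
Each of the `k` summands is at most `B / k`, so the sum is at most `B`. The smallest repair term
is the last one, `j = k - 1`, equal to `(d - k + 1) / d * γ`; the bound on `γ` says exactly that it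
is below `B / k`, so one summand is strictly smaller and the inequality is strict.
-/

/-- At minimum storage `α = B/k`, any repair bandwidth `γ` strictly below the MSR
bandwidth `dB/(k(d-k+1))` gives functional-repair capacity strictly less than `B`. -/
theorem functional_capacity_lt_below_MSR_bandwidth (k d : ℕ) (hk : 1 ≤ k) (hkd : k ≤ d)
    (B : ℝ) (hB : 0 < B) (γ : ℝ) (hγ0 : 0 ≤ γ)
    (hγ : γ < (d : ℝ) * B / (k * ((d : ℝ) - k + 1))) :
    ∑ j ∈ Finset.range k, min (B / k) (((d : ℝ) - j) / d * γ) < B := by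
  have hk0 : (0 : ℝ) < k := by exact_mod_cast hk
  have hkd' : (k : ℝ) ≤ d := by exact_mod_cast hkd
  have hd0 : (0 : ℝ) < d := hk0.trans_le hkd'
  have hm : (0 : ℝ) < (d : ℝ) - k + 1 := by linarith
  have hlast : ((d : ℝ) - (k - 1 : ℕ)) / d * γ < B / k := by
    rw [Nat.cast_sub hk, Nat.cast_one, div_mul_eq_mul_div, div_lt_div_iff₀ hd0 hk0]
    rw [lt_div_iff₀ (mul_pos hk0 hm)] at hγ
    linarith
  calc ∑ j ∈ Finset.range k, min (B / k) (((d : ℝ) - j) / d * γ)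
      < ∑ _j ∈ Finset.range k, B / k :=
        Finset.sum_lt_sum (fun _ _ => min_le_left _ _)
          ⟨k - 1, Finset.mem_range.2 (by omega), (min_le_right _ _).trans_lt hlast⟩
    _ = B := by
        rw [Finset.sum_const, Finset.card_range, nsmul_eq_mul, mul_div_cancel₀ _ hk0.ne']
end

section
/- Let k and d be integers with 1 ≤ k ≤ d, let B > 0 be real, set γ = 2dB/(k(2d−k+1)), and let α be a real with 0 ≤ α < γ. Then C_{k,d}(α,γ) = ∑_{j=0}^{k−1} min{α, ((d−j)/d)·γ} < B. In other words, at minimum bandwidth γ = 2dB/(k(2d−k+1)), the node size α = γ of the MBR point is the minimum storage allowing the storage of a file of size B. -/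
/-!
Bounding every `min` by its second argument gives `∑ (d - j) / d * γ = k (2d - k + 1) / (2d) * γ`,
which is exactly `B` for the given `γ`. The inequality is strict because the `j = 0` term is
`min α γ = α < γ`.
-/

/-- Gauss summation of the repair contributions of the `k` contacted nodes. -/
lemma sum_repair_bandwidth (k : ℕ) (d γ : ℝ) :
    ∑ j ∈ Finset.range k, (d - j) / d * γ = k * (2 * d - k + 1) / (2 * d) * γ := by
  induction k with
  | zero => simp
  | succ n ih =>
    rw [Finset.sum_range_succ, ih]
    push_cast
    by_cases hd : d = 0
    · simp [hd]
    · field_simp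
      ring

/-- At minimum bandwidth `γ = 2dB/(k(2d-k+1))`, any node size `α` strictly below
`γ` gives functional-repair capacity strictly less than `B`. -/
theorem functional_capacity_lt_below_MBR_storage (k d : ℕ) (hk : 1 ≤ k) (hkd : k ≤ d)
    (B : ℝ) (hB : 0 < B) (γ : ℝ)
    (hγ : γ = 2 * d * B / (k * (2 * (d : ℝ) - k + 1)))
    (α : ℝ) (hα0 : 0 ≤ α) (hα : α < γ) :
    ∑ j ∈ Finset.range k, min α (((d : ℝ) - j) / d * γ) < B := by
  have hk' : (1 : ℝ) ≤ k := by exact_mod_cast hk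
  have hkd' : (k : ℝ) ≤ d := by exact_mod_cast hkd
  have hk0 : (k : ℝ) ≠ 0 := by linarith
  have hd0 : (d : ℝ) ≠ 0 := by linarith
  have hden : 2 * (d : ℝ) - k + 1 ≠ 0 := by linarith
  calc ∑ j ∈ Finset.range k, min α (((d : ℝ) - j) / d * γ)
      < ∑ j ∈ Finset.range k, ((d : ℝ) - j) / d * γ := by
        refine Finset.sum_lt_sum (fun j _ => min_le_right _ _)
          ⟨0, Finset.mem_range.mpr hk, (min_le_left _ _).trans_lt ?_⟩
        simpa [hd0] using hα
    _ = B := by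
        rw [sum_repair_bandwidth, hγ]
        field_simp
end

section
/- Fix an integer i ≥ 1 and a real α > 0. For each integer n ≥ 2 set T_n = ⌊(n−1)(1 − 1/i)⌋, f_n(i) = n·i·α/(1+i), and C_n = (T_n+1)·α + (i·α/(2(n−1)))·(n−T_n−1)·(n−T_n−2). Then the ratio f_n(i)/C_n converges, as n → ∞, to 2i²/(2i² + i − 1). -/
/-!
Put `c = 1 - 1/i`. Since `T n` differs from `(n - 1) c` by at most `1`, `T n / n → c`. Dividing
`C n` by `n` writes it as a continuous expression in `T n / n` and `1 / n`, so
`C n / n → c α + (i α / 2) (1 - c)² = α (1 - 1/(2i))`, while `f n / n = i α / (1 + i)`. The quotient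
of the two limits is `2 i² / ((i + 1) (2 i - 1))`.
-/

open Filter

theorem floor_sub_one_mul_div_tendsto (c : ℝ) :
    Tendsto (fun n : ℕ => (⌊((n : ℝ) - 1) * c⌋ : ℝ) / n) atTop (nhds c) := by
  have h1 : Tendsto (fun n : ℕ => 1 / (n : ℝ)) atTop (nhds 0) :=
    tendsto_one_div_atTop_nhds_zero_nat
  have hfr : Tendsto (fun n : ℕ => Int.fract (((n : ℝ) - 1) * c) * (1 / (n : ℝ)))
      atTop (nhds 0) := by
    refine squeeze_zero (fun n => ?_) (fun n => ?_) h1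
    · exact mul_nonneg (Int.fract_nonneg _) (by positivity)
    · exact mul_le_of_le_one_left (by positivity) (Int.fract_lt_one _).le
  have h := ((h1.const_sub 1).mul_const c).sub hfr
  simp only [sub_zero, one_mul] at h
  refine h.congr' ?_
  filter_upwards [eventually_ge_atTop 1] with n hn
  have hn' : (n : ℝ) ≠ 0 := by positivity
  rw [Int.fract]
  field_simp
  ring

/-- For fixed `i ≥ 1` and `α > 0`, the ratio of the construction's performance
`f_n(i) = n·i·α/(1+i)` to the functional-repair capacity
`C_n = (T_n+1)·α + (iα/(2(n-1)))·(n-T_n-1)·(n-T_n-2)`, with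
`T_n = ⌊(n-1)(1-1/i)⌋`, tends to `2i²/(2i²+i-1)` as `n → ∞`. -/
theorem ratio_tendsto (i : ℕ) (hi : 1 ≤ i) (α : ℝ) (hα : 0 < α)
    (T : ℕ → ℤ) (hT : ∀ n, T n = ⌊((n : ℝ) - 1) * (1 - 1 / (i : ℝ))⌋)
    (f C : ℕ → ℝ)
    (hf : ∀ n, f n = (n : ℝ) * i * α / (1 + i))
    (hC : ∀ n, C n = ((T n : ℝ) + 1) * α +
        (i : ℝ) * α / (2 * ((n : ℝ) - 1)) * ((n : ℝ) - T n - 1) * ((n : ℝ) - T n - 2)) :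
    Tendsto (fun n => f n / C n) atTop
      (nhds (2 * (i : ℝ) ^ 2 / (2 * (i : ℝ) ^ 2 + i - 1))) := by
  have hi' : (1 : ℝ) ≤ i := by exact_mod_cast hi
  have hi0 : (i : ℝ) ≠ 0 := by positivity
  have h1 : Tendsto (fun n : ℕ => 1 / (n : ℝ)) atTop (nhds 0) :=
    tendsto_one_div_atTop_nhds_zero_nat
  have hTn : Tendsto (fun n => (T n : ℝ) / n) atTop (nhds (1 - 1 / (i : ℝ))) := by
    simp only [hT]
    exact floor_sub_one_mul_div_tendsto _
  have hCn : Tendsto (fun n => C n / n) atTop (nhds (α * (1 - 1 / (2 * i)))) := by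
    have h := ((hTn.add h1).mul_const α).add
      ((((((hTn.const_sub 1).sub h1).mul ((hTn.const_sub 1).sub (h1.const_mul 2))).div
        (h1.const_sub 1) (by norm_num))).const_mul ((i : ℝ) * α / 2))
    have hlim : (1 - 1 / (i : ℝ) + 0) * α + (i : ℝ) * α / 2 *
        ((1 - (1 - 1 / (i : ℝ)) - 0) * (1 - (1 - 1 / (i : ℝ)) - 2 * 0) / (1 - 0))
        = α * (1 - 1 / (2 * i)) := by
      field_simp
      ring
    rw [hlim] at h
    refine h.congr' ?_
    -- `n ≥ 2` keeps the denominator `n - 1` nonzero, so that division by it is genuine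
    filter_upwards [eventually_ge_atTop 2] with n hn
    have hn2 : (2 : ℝ) ≤ n := by exact_mod_cast hn
    have hn0 : (n : ℝ) ≠ 0 := by positivity
    have hn1 : (n : ℝ) - 1 ≠ 0 := by linarith
    have hd : 1 - 1 / (n : ℝ) = ((n : ℝ) - 1) / n := by field_simp
    simp only [Pi.div_apply]
    rw [hC, hd]
    field_simp
  have hpos : α * (1 - 1 / (2 * (i : ℝ))) ≠ 0 := by
    have : 1 / (2 * (i : ℝ)) < 1 := by
      rw [div_lt_one (by positivity)]
      linarith
    exact (mul_pos hα (by linarith)).ne'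
  have h := (tendsto_const_nhds (x := (i : ℝ) * α / (1 + i)) (f := atTop)).div hCn hpos
  have hlim : (i : ℝ) * α / (1 + i) / (α * (1 - 1 / (2 * i))) =
      2 * (i : ℝ) ^ 2 / (2 * (i : ℝ) ^ 2 + i - 1) := by
    have e1 : (1 : ℝ) + i ≠ 0 := by positivity
    have e2 : 2 * (i : ℝ) - 1 ≠ 0 := by linarith
    have e3 : 2 * (i : ℝ) ^ 2 + i - 1 = (1 + i) * (2 * i - 1) := by ring
    have e4 : 1 - 1 / (2 * (i : ℝ)) = (2 * i - 1) / (2 * i) := by field_simp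
    rw [e3, e4]
    field_simp
  rw [hlim] at h
  refine h.congr' ?_
  filter_upwards [eventually_ge_atTop 1] with n hn
  have hn0 : (n : ℝ) ≠ 0 := by positivity
  have hfn : (i : ℝ) * α / (1 + i) = f n / n := by
    rw [hf]
    field_simp
  rw [Pi.div_apply, hfn, div_div_div_cancel_right₀ hn0]
end

section
/- Let n, k, d be integers with 1 ≤ k ≤ d and k ≤ n, let s ∈ (0, 1] and α > 0 be fixed reals. For each positive integer M set n_M = n + M, k_M = k + M, d_M = d + M, i_M = 1 + s·(k_M − 1), γ_M = (d_M − k_M + i_M)·α/(d_M − k_M + 1), g_M = n_M·i_M·α/(n − k + i_M), and C_M = ∑_{j=0}^{k_M−1} min{α, ((d_M − j)/d_M)·γ_M}. Then g_M/C_M → 1 as M → ∞. -/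
/-!
Write `D = d - k + 1` and `X = k + M - 1`. The number of summands of `C M` is `k + M = X + 1`, and
each is at most `α`. Since `d + M = D + X` and `γ M = (D + sX)α/D`, the bound `D + sX ≥ s(D + X)`
(valid as `s ≤ 1`) shows that the summand `j` equals `α` as soon as `(d + M - j) s ≥ D`. This fails
only for the last few `j`, at most `T = ⌈D/s⌉` of them, a number that does not depend on `M`; hence
`(k + M - T)α ≤ C M ≤ (k + M)α` (`capacity_lower` gives the left half) and `C M / (k + M) → α`.
On the other side
`g M / (k + M) = α · (n + M)/(k + M) · i M/(n - k + i M) → α`, because `i M → ∞`.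
The quotient of the two limits is `1`.
-/

open Filter

/-- All but a bounded number `T` of the summands saturate at `α`. Here `T` is any natural number
with `(d - k + 1) / s ≤ T`. -/
lemma capacity_lower (k d M T : ℕ) (hk : 1 ≤ k) (hkd : k ≤ d) (s α γ : ℝ)
    (hs0 : 0 < s) (hs1 : s ≤ 1) (hα : 0 < α)
    (hT : ((d : ℝ) - k + 1) / s ≤ T)
    (hγ : γ = (((d : ℝ) + M) - ((k : ℝ) + M) + (1 + s * ((k : ℝ) + M - 1))) * α /
      (((d : ℝ) + M) - ((k : ℝ) + M) + 1)) :
    ((k : ℝ) + M - T) * α ≤ ∑ j ∈ Finset.range (k + M),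
        min α ((((d : ℝ) + M) - j) / ((d : ℝ) + M) * γ) := by
  have hk' : (1 : ℝ) ≤ k := by exact_mod_cast hk
  have hkd' : (k : ℝ) ≤ d := by exact_mod_cast hkd
  have hM : (0 : ℝ) ≤ M := M.cast_nonneg
  have hD : (0 : ℝ) < (d : ℝ) - k + 1 := by linarith
  have hdM : (0 : ℝ) < (d : ℝ) + M := by linarith
  have hsT : (d : ℝ) - k + 1 ≤ T * s := (div_le_iff₀ hs0).1 hT
  have hγs : ((d : ℝ) + M) * (s * α / ((d : ℝ) - k + 1)) ≤ γ := by
    have e : ((d : ℝ) + M) - ((k : ℝ) + M) + 1 = (d : ℝ) - k + 1 := by ring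
    rw [hγ, e, ← mul_div_assoc]
    apply div_le_div_of_nonneg_right _ hD.le
    have h1 : ((d : ℝ) + M) * s ≤
        ((d : ℝ) + M) - ((k : ℝ) + M) + (1 + s * ((k : ℝ) + M - 1)) := by
      nlinarith [mul_nonneg hD.le (sub_nonneg.2 hs1)]
    calc ((d : ℝ) + M) * (s * α) = (((d : ℝ) + M) * s) * α := by ring
      _ ≤ _ := mul_le_mul_of_nonneg_right h1 hα.le
  have hterm : ∀ j : ℕ, (j : ℝ) ≤ d + M →
      ((d : ℝ) + M - j) * (s * α / ((d : ℝ) - k + 1)) ≤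
        (((d : ℝ) + M) - j) / ((d : ℝ) + M) * γ := by
    intro j hj
    rw [div_mul_eq_mul_div, le_div_iff₀ hdM, mul_assoc, mul_comm _ ((d : ℝ) + M)]
    exact mul_le_mul_of_nonneg_left hγs (sub_nonneg.2 hj)
  calc ((k : ℝ) + M - T) * α ≤ ((k + M - T : ℕ) : ℝ) * α := by
        apply mul_le_mul_of_nonneg_right _ hα.le
        have : k + M ≤ (k + M - T) + T := by omega
        have : (k : ℝ) + M ≤ ((k + M - T : ℕ) : ℝ) + T := by exact_mod_cast this
        linarith
    _ = ∑ j ∈ Finset.range (k + M - T), α := by simp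
    _ ≤ ∑ j ∈ Finset.range (k + M - T),
        min α ((((d : ℝ) + M) - j) / ((d : ℝ) + M) * γ) := by
        apply Finset.sum_le_sum
        intro j hj
        have hj' : j + T + 1 ≤ k + M := by
          have := Finset.mem_range.1 hj
          omega
        have hjr : (j : ℝ) + T + 1 ≤ k + M := by exact_mod_cast hj'
        have hT0 : (0 : ℝ) ≤ T := T.cast_nonneg
        refine le_min le_rfl (le_trans ?_ (hterm j (by linarith)))
        rw [← mul_div_assoc, le_div_iff₀ hD]
        have : (d : ℝ) - k + 1 ≤ ((d : ℝ) + M - j) * s :=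
          hsT.trans (mul_le_mul_of_nonneg_right (by linarith) hs0.le)
        nlinarith [mul_le_mul_of_nonneg_right this hα.le]
    _ ≤ _ := by
        apply Finset.sum_le_sum_of_subset_of_nonneg
        · exact Finset.range_mono (Nat.sub_le _ _)
        · intro j hj _
          have hj' : j < k + M := Finset.mem_range.1 hj
          have hjr : (j : ℝ) < k + M := by exact_mod_cast hj'
          refine le_min hα.le (le_trans ?_ (hterm j (by linarith)))
          exact mul_nonneg (by linarith) (by positivity)

/-- The ratio of the construction's performance `g_M = n_M·i_M·α/(n-k+i_M)` to the
functional-repair capacity `C_M = ∑_{j=0}^{k_M-1} min{α, ((d_M-j)/d_M)·γ_M}`, with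
`i_M = 1 + s(k_M-1)` and `γ_M = (d_M-k_M+i_M)α/(d_M-k_M+1)`, tends to `1` as `M → ∞`. -/
theorem construction_ratio_tendsto_one (n k d : ℕ) (hk : 1 ≤ k) (hkd : k ≤ d)
    (hkn : k ≤ n) (s : ℝ) (hs0 : 0 < s) (hs1 : s ≤ 1) (α : ℝ) (hα : 0 < α)
    (i γ g C : ℕ → ℝ)
    (hi : ∀ M : ℕ, i M = 1 + s * ((k : ℝ) + M - 1))
    (hγ : ∀ M : ℕ, γ M =
        (((d : ℝ) + M) - ((k : ℝ) + M) + i M) * α / (((d : ℝ) + M) - ((k : ℝ) + M) + 1))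
    (hg : ∀ M : ℕ, g M = ((n : ℝ) + M) * i M * α / ((n : ℝ) - k + i M))
    (hC : ∀ M : ℕ, C M = ∑ j ∈ Finset.range (k + M),
        min α ((((d : ℝ) + M) - j) / ((d : ℝ) + M) * γ M)) :
    Tendsto (fun M : ℕ => g M / C M) atTop (nhds 1) := by
  have hk' : (1 : ℝ) ≤ k := by exact_mod_cast hk
  have hkn' : (k : ℝ) ≤ n := by exact_mod_cast hkn
  have hKpos : ∀ M : ℕ, (0 : ℝ) < (k : ℝ) + M := fun M => by positivity
  have hipos : ∀ M : ℕ, 0 < i M := fun M => by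
    have hM : (0 : ℝ) ≤ M := M.cast_nonneg
    have := mul_nonneg hs0.le (by linarith : (0 : ℝ) ≤ (k : ℝ) + M - 1)
    rw [hi]
    linarith
  have hK : Tendsto (fun M : ℕ => (k : ℝ) + M) atTop atTop :=
    tendsto_atTop_add_const_left _ _ tendsto_natCast_atTop_atTop
  have hitop : Tendsto i atTop atTop := by
    have : i = fun M : ℕ => 1 + s * ((k : ℝ) + M + (-1)) := by
      funext M
      rw [hi]
      ring
    rw [this]
    exact tendsto_atTop_add_const_left _ _
      ((tendsto_atTop_add_const_right _ _ hK).const_mul_atTop hs0)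
  have hClim : Tendsto (fun M : ℕ => C M / ((k : ℝ) + M)) atTop (nhds α) := by
    obtain ⟨T, hT⟩ := exists_nat_ge (((d : ℝ) - k + 1) / s)
    have hlow : Tendsto (fun M : ℕ => α - (T * α) / ((k : ℝ) + M)) atTop (nhds α) := by
      simpa using (hK.const_div_atTop (T * α)).const_sub α
    refine tendsto_of_tendsto_of_tendsto_of_le_of_le hlow tendsto_const_nhds
      (fun M => ?_) (fun M => ?_)
    · have h := capacity_lower k d M T hk hkd s α (γ M) hs0 hs1 hα hT (by rw [hγ, hi])
      rw [← hC] at h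
      have hne := (hKpos M).ne'
      have e : α - (T * α) / ((k : ℝ) + M) = (((k : ℝ) + M - T) * α) / ((k : ℝ) + M) := by
        field_simp
      exact e.trans_le (div_le_div_of_nonneg_right h (hKpos M).le)
    · rw [div_le_iff₀ (hKpos M), hC]
      refine (Finset.sum_le_sum fun j _ => min_le_left _ _).trans (le_of_eq ?_)
      simp
      ring
  have hglim : Tendsto (fun M : ℕ => g M / ((k : ℝ) + M)) atTop (nhds α) := by
    have h1 : Tendsto (fun M : ℕ => 1 + ((n : ℝ) - k) / ((k : ℝ) + M)) atTop (nhds 1) := by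
      simpa using (hK.const_div_atTop ((n : ℝ) - k)).const_add 1
    have h2 : Tendsto (fun M : ℕ => 1 - ((n : ℝ) - k) / ((n : ℝ) - k + i M)) atTop
        (nhds 1) := by
      simpa using ((tendsto_atTop_add_const_left _ ((n : ℝ) - k) hitop).const_div_atTop
        ((n : ℝ) - k)).const_sub 1
    have h3 := (h1.mul h2).mul_const α
    rw [one_mul, one_mul] at h3
    refine h3.congr fun M => ?_
    have hne := (hKpos M).ne'
    have hne2 : (n : ℝ) - k + i M ≠ 0 := by
      have := hipos M
      linarith
    rw [hg]
    field_simp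
    ring
  have h := hglim.div hClim hα.ne'
  rw [div_self hα.ne'] at h
  exact h.congr fun M => div_div_div_cancel_right₀ (hKpos M).ne' _ _
end

section
/- Let n, k, d be integers with 1 ≤ k ≤ d and k ≤ n, let s ∈ (0, 1] and α > 0 be fixed reals. For each positive integer M set n_M = n + M, k_M = k + M, d_M = d + M, i_M = 1 + s·(k_M − 1), γ_M = (d_M − k_M + i_M)·α/(d_M − k_M + 1), g_M = n_M·i_M·α/(n − k + i_M), and C_M = ∑_{j=0}^{k_M−1} min{α, ((d_M − j)/d_M)·γ_M}. If (c_M) is any sequence of real numbers satisfying g_M ≤ c_M ≤ C_M for all M, then c_M/C_M → 1 as M → ∞. -/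
/-!
Every term of the sum defining `C M` is at most `α`, so `C M ≤ (k + M) α`. As `n ≥ k`, this bounds
`g M / C M` from below by `i M / (n - k + i M) = 1 - (n - k) / (n - k + i M)`, which tends to `1`
because `i M` grows linearly in `M` with slope `s > 0`. Since `0 < g M ≤ c M ≤ C M`, the ratio
`c M / C M` is squeezed between this bound and `1`.
-/

open Filter

/-- Squeeze form of the asymptotic optimality: any sequence `c_M` (such as the
exact-repair capacity) with `g_M ≤ c_M ≤ C_M` satisfies `c_M/C_M → 1` as `M → ∞`. -/
theorem exact_capacity_ratio_tendsto_one (n k d : ℕ) (hk : 1 ≤ k) (hkd : k ≤ d)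
    (hkn : k ≤ n) (s : ℝ) (hs0 : 0 < s) (hs1 : s ≤ 1) (α : ℝ) (hα : 0 < α)
    (i γ g C : ℕ → ℝ)
    (hi : ∀ M : ℕ, i M = 1 + s * ((k : ℝ) + M - 1))
    (hγ : ∀ M : ℕ, γ M =
        (((d : ℝ) + M) - ((k : ℝ) + M) + i M) * α / (((d : ℝ) + M) - ((k : ℝ) + M) + 1))
    (hg : ∀ M : ℕ, g M = ((n : ℝ) + M) * i M * α / ((n : ℝ) - k + i M))
    (hC : ∀ M : ℕ, C M = ∑ j ∈ Finset.range (k + M),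
        min α ((((d : ℝ) + M) - j) / ((d : ℝ) + M) * γ M))
    (c : ℕ → ℝ) (hc : ∀ M : ℕ, g M ≤ c M ∧ c M ≤ C M) :
    Tendsto (fun M : ℕ => c M / C M) atTop (nhds 1) := by
  have hk1 : (1 : ℝ) ≤ k := by exact_mod_cast hk
  have hkn' : (k : ℝ) ≤ n := by exact_mod_cast hkn
  have hipos : ∀ M, 0 < i M := fun M => by
    rw [hi]
    have : 0 ≤ s * ((k : ℝ) + M - 1) :=
      mul_nonneg hs0.le (by linarith [(Nat.cast_nonneg M : (0 : ℝ) ≤ M)])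
    linarith
  have hden : ∀ M, 0 < (n : ℝ) - k + i M := fun M => by linarith [hipos M]
  have hgpos : ∀ M, 0 < g M := fun M => by
    rw [hg]
    have := hipos M
    have := hden M
    have : (0 : ℝ) < n := by linarith
    positivity
  have hCpos : ∀ M, 0 < C M := fun M => (hgpos M).trans_le ((hc M).1.trans (hc M).2)
  have hCle : ∀ M, C M ≤ ((k : ℝ) + M) * α := fun M => by
    rw [hC]
    refine (Finset.sum_le_card_nsmul _ _ α fun j _ => min_le_left _ _).trans ?_
    simp
  have hlow : ∀ M, 1 - ((n : ℝ) - k) / ((n : ℝ) - k + i M) ≤ c M / C M := fun M => by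
    rw [le_div_iff₀ (hCpos M)]
    refine le_trans ?_ (hc M).1
    have e : 1 - ((n : ℝ) - k) / ((n : ℝ) - k + i M) = i M / ((n : ℝ) - k + i M) := by
      have := (hden M).ne'
      field_simp
      ring
    have hq : 0 ≤ i M / ((n : ℝ) - k + i M) := (div_pos (hipos M) (hden M)).le
    calc _ = i M / ((n : ℝ) - k + i M) * C M := by rw [e]
      _ ≤ i M / ((n : ℝ) - k + i M) * (((n : ℝ) + M) * α) :=
        mul_le_mul_of_nonneg_left
          ((hCle M).trans (mul_le_mul_of_nonneg_right (by linarith) hα.le)) hq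
      _ = g M := by rw [hg]; ring
  have hitop : Tendsto i atTop atTop := by
    have h : Tendsto (fun M : ℕ => (1 + s * ((k : ℝ) - 1)) + s * (M : ℝ)) atTop atTop :=
      tendsto_atTop_add_const_left _ _ (tendsto_natCast_atTop_atTop.const_mul_atTop hs0)
    refine h.congr fun M => ?_
    rw [hi]
    ring
  have hlim : Tendsto (fun M => 1 - ((n : ℝ) - k) / ((n : ℝ) - k + i M)) atTop (nhds 1) := by
    simpa using ((tendsto_atTop_add_const_left _ ((n : ℝ) - k) hitop).const_div_atTop
      ((n : ℝ) - k)).const_sub 1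
  exact tendsto_of_tendsto_of_tendsto_of_le_of_le hlim tendsto_const_nhds hlow
    fun M => (div_le_one (hCpos M)).2 (hc M).2
end
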